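/- Let G be a finite bipartite graph with color classes A and B, b : V(G) → ℕ, and let C₁ and C₂ be two distinct b-loose flexible components both hooked up by A. Then there is no edge of G with one end in V(C₁) and the other end in V(C₂). -/

import Mathlib

open scoped symmDiff

variable {V : Type} [Fintype V]

/-- `G` is bipartite with color classes `A` and `B`. -/
structure Bipartition (G : SimpleGraph V) (A B : Set V) : Prop where
  disjoint : Disjoint A B
  cover : A ∪ B = Set.univ
  between : ∀ ⦃u v : V⦄, G.Adj u v → (u ∈ A ∧ v ∈ B) ∨ (u ∈ B ∧ v ∈ A)

/-- `M` is a `b`-matching of `G`: a set of edges of `G` such that each vertex `v` is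
incident to at most `b v` edges of `M`. -/
def IsBMatching (G : SimpleGraph V) (b : V → ℕ) (M : Set (Sym2 V)) : Prop :=
  M ⊆ G.edgeSet ∧ ∀ v : V, {e ∈ M | v ∈ e}.ncard ≤ b v

/-- `M` is a maximum `b`-matching of `G`. -/
def IsMaxBMatching (G : SimpleGraph V) (b : V → ℕ) (M : Set (Sym2 V)) : Prop :=
  IsBMatching G b M ∧ ∀ N : Set (Sym2 V), IsBMatching G b N → N.ncard ≤ M.ncard

/-- `E[X]`: the set of edges of `G` with both ends in `X`. -/
def edgesIn (G : SimpleGraph V) (X : Set V) : Set (Sym2 V) :=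
  {e ∈ G.edgeSet | ∀ v ∈ e, v ∈ X}

/-- `b(X) = ∑_{v ∈ X} b v`. -/
noncomputable def bSum (b : V → ℕ) (X : Set V) : ℕ := ∑ᶠ v ∈ X, b v

/-- `Z` is a `b`-verifying set: `b(Zᶜ) + |E[Z]|` equals the size of a maximum `b`-matching. -/
def IsVerifying (G : SimpleGraph V) (b : V → ℕ) (Z : Set V) : Prop :=
  ∃ M : Set (Sym2 V), IsMaxBMatching G b M ∧ bSum b Zᶜ + (edgesIn G Z).ncard = M.ncard

/-- `v` is `M`-tight. -/
def IsTight (b : V → ℕ) (M : Set (Sym2 V)) (v : V) : Prop :=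
  {e ∈ M | v ∈ e}.ncard = b v

/-- `v` is `M`-loose. -/
def IsLoose (b : V → ℕ) (M : Set (Sym2 V)) (v : V) : Prop :=
  {e ∈ M | v ∈ e}.ncard < b v

/-- `M` is a perfect `b`-matching. -/
def IsPerfect (G : SimpleGraph V) (b : V → ℕ) (M : Set (Sym2 V)) : Prop :=
  IsBMatching G b M ∧ ∀ v : V, IsTight b M v

/-- An edge is `b`-inevitable if it is an edge of `G` contained in every maximum `b`-matching. -/
def IsInevitable (G : SimpleGraph V) (b : V → ℕ) (e : Sym2 V) : Prop :=
  e ∈ G.edgeSet ∧ ∀ M : Set (Sym2 V), IsMaxBMatching G b M → e ∈ M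

/-- An edge is `b`-forbidden if it is an edge of `G` contained in no maximum `b`-matching. -/
def IsForbidden (G : SimpleGraph V) (b : V → ℕ) (e : Sym2 V) : Prop :=
  e ∈ G.edgeSet ∧ ∀ M : Set (Sym2 V), IsMaxBMatching G b M → e ∉ M

/-- An edge is `b`-flexible if some maximum `b`-matching contains it and some does not. -/
def IsFlexibleEdge (G : SimpleGraph V) (b : V → ℕ) (e : Sym2 V) : Prop :=
  (∃ M : Set (Sym2 V), IsMaxBMatching G b M ∧ e ∈ M) ∧
  (∃ M : Set (Sym2 V), IsMaxBMatching G b M ∧ e ∉ M)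

/-- The spanning subgraph of `G` whose edges are the `b`-flexible edges. -/
def flexGraph (G : SimpleGraph V) (b : V → ℕ) : SimpleGraph V where
  Adj u v := IsFlexibleEdge G b s(u, v)
  symm := by
    constructor
    intro u v h
    rwa [Sym2.eq_swap] at h
  loopless := by
    constructor
    intro v h
    obtain ⟨⟨M, hM, heM⟩, -⟩ := h
    exact G.loopless.irrefl v ((G.mem_edgeSet).mp (hM.1.1 heM))

/-- A `b`-flexible component of `G`, identified with the corresponding connected
component of the spanning subgraph of flexible edges. -/
abbrev FlexComp (G : SimpleGraph V) (b : V → ℕ) := (flexGraph G b).ConnectedComponent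

/-- `D(G;b)`: the set of vertices that are `M`-loose for some maximum `b`-matching `M`. -/
def Dset (G : SimpleGraph V) (b : V → ℕ) : Set V :=
  {v | ∃ M : Set (Sym2 V), IsMaxBMatching G b M ∧ IsLoose b M v}

/-- `c` is a `b`-loose flexible component. -/
def LooseComp (G : SimpleGraph V) (b : V → ℕ) (c : FlexComp G b) : Prop :=
  ∃ v ∈ c.supp, v ∈ Dset G b

/-- `c` is a `b`-inactive flexible component. -/
def InactiveComp (G : SimpleGraph V) (b : V → ℕ) (c : FlexComp G b) : Prop :=
  ∃ v, c.supp = {v} ∧ b v = 0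

/-- `c` is a `b`-inconsistent flexible component. -/
def InconsistentComp (G : SimpleGraph V) (b : V → ℕ) (c : FlexComp G b) : Prop :=
  LooseComp G b c ∨ ∃ v, c.supp = {v} ∧ b v = 0 ∧ ∃ u ∈ Dset G b, G.Adj v u

/-- `c` is a `b`-consistent flexible component. -/
def ConsistentComp (G : SimpleGraph V) (b : V → ℕ) (c : FlexComp G b) : Prop :=
  ¬ InconsistentComp G b c

/-- `c` is a `b`-loose flexible component hooked up by the color class `W`. -/
def LooseHooked (G : SimpleGraph V) (b : V → ℕ) (W : Set V) (c : FlexComp G b) : Prop :=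
  ∃ v ∈ c.supp ∩ W, v ∈ Dset G b

/-- `c` is a `b`-inactive flexible component hooked up by the color class `W`. -/
def InactiveHooked (G : SimpleGraph V) (b : V → ℕ) (W : Set V) (c : FlexComp G b) : Prop :=
  ∃ v, c.supp = {v} ∧ b v = 0 ∧ ∃ u ∈ Dset G b ∩ W, G.Adj v u

/-- `c` is a `b`-inconsistent flexible component hooked up by the color class `W`. -/
def HookedUp (G : SimpleGraph V) (b : V → ℕ) (W : Set V) (c : FlexComp G b) : Prop :=
  LooseHooked G b W c ∨ InactiveHooked G b W c

/-- `X` is separating: empty or a union of vertex sets of `b`-flexible components. -/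
def IsSeparating (G : SimpleGraph V) (b : V → ℕ) (X : Set V) : Prop :=
  ∃ S : Set (FlexComp G b), X = ⋃ c ∈ S, c.supp

/-- The number of edges in the list `es` incident to `v` that lie in `M`. -/
noncomputable def edgeDeg (es : List (Sym2 V)) (M : Set (Sym2 V)) (v : V) : ℕ :=
  {e : Sym2 V | e ∈ es ∧ v ∈ e ∧ e ∈ M}.ncard

/-- `p` is an `M`-wedge path from `x` to `y`. -/
def IsWedgePath {G : SimpleGraph V} (M : Set (Sym2 V)) {x y : V} (p : G.Walk x y) : Prop :=
  p.IsPath ∧ (∀ v ∈ p.support, v ≠ y → edgeDeg p.edges M v = 1) ∧ edgeDeg p.edges M y = 0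

/-- `p` is an `M`-saturated path between `x` and `y`. -/
def IsSaturatedPath {G : SimpleGraph V} (M : Set (Sym2 V)) {x y : V} (p : G.Walk x y) : Prop :=
  p.IsPath ∧ ∀ v ∈ p.support, edgeDeg p.edges M v = 1

/-- `p` is an `M`-exposed path between `x` and `y`. -/
def IsExposedPath {G : SimpleGraph V} (M : Set (Sym2 V)) {x y : V} (p : G.Walk x y) : Prop :=
  p.IsPath ∧ ∀ v ∈ p.support, edgeDeg p.edges Mᶜ v = 1

/-- `p` is an `(M; A, B)`-ascending path from `u` to `v`. -/
def IsAscending {G : SimpleGraph V} (A B : Set V) (M : Set (Sym2 V)) {u v : V}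
    (p : G.Walk u v) : Prop :=
  (u ∈ A → v ∈ A → IsWedgePath M p) ∧
  (u ∈ A → v ∈ B → IsSaturatedPath M p) ∧
  (u ∈ B → v ∈ A → IsExposedPath M p) ∧
  (u ∈ B → v ∈ B → IsWedgePath M p.reverse)

/-- The one-step relation `⊴_A` on `b`-flexible components: `c₁ ⊴_A c₂` iff `c₁ = c₂`, or
there is a `b`-inevitable edge between `V(c₁) ∩ A` and `V(c₂) ∩ B`, or a `b`-forbidden edge
between `V(c₂) ∩ A` and `V(c₁) ∩ B`. -/
def StepRel (G : SimpleGraph V) (b : V → ℕ) (A B : Set V) (c₁ c₂ : FlexComp G b) : Prop :=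
  c₁ = c₂ ∨
  (∃ u ∈ c₁.supp ∩ A, ∃ v ∈ c₂.supp ∩ B, IsInevitable G b s(u, v)) ∨
  (∃ u ∈ c₂.supp ∩ A, ∃ v ∈ c₁.supp ∩ B, IsForbidden G b s(u, v))

/-- The one-step relation `⊴_A` restricted to `b`-consistent flexible components. -/
def ConsStepRel (G : SimpleGraph V) (b : V → ℕ) (A B : Set V) (c₁ c₂ : FlexComp G b) : Prop :=
  ConsistentComp G b c₁ ∧ ConsistentComp G b c₂ ∧ StepRel G b A B c₁ c₂

/-- `I` is a lower ideal of the relation `r`. -/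
def IsLowerIdeal {α : Type*} (r : α → α → Prop) (I : Set α) : Prop :=
  ∀ ⦃c d : α⦄, d ∈ I → r c d → c ∈ I

/-- `I` is an upper ideal of the relation `r`. -/
def IsUpperIdeal {α : Type*} (r : α → α → Prop) (I : Set α) : Prop :=
  ∀ ⦃c d : α⦄, c ∈ I → r c d → d ∈ I

/-!
Fix a maximum `b`-matching `M` and consider all the matchings obtained from it by successive
exchanges, each of which replaces an edge `a'w` by `aw` for a loose `a ∈ A`. Let `T ⊆ A` be the
vertices that become loose in the process, and let `S ⊆ B` be the vertices `w` at which such an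
exchange can be made. Then `T ∪ (B \ S)` is a verifying set, so by complementary slackness every
flexible edge has exactly one end in it. A loose component hooked up by `A` contains a vertex of
`T`, whence `T` contains all its vertices in `A` and `S` all its vertices in `B`.

Now let `u ∈ A` and `v ∈ B` be adjacent vertices of two such components. Since `u` is loose in some
maximum `b`-matching, an edge at `v` can be replaced by `uv` there, so some maximum `b`-matching
contains `uv`. Since `v ∈ S`, some maximum `b`-matching avoids `uv`, because `uv` can be replaced by
another edge at `v`. So `uv` is flexible, and the two components coincide.
-/

section Incidence

variable {α : Type*} [Finite α] {M : Set (Sym2 α)} {e f : Sym2 α}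

theorem ncard_incident_insert (he : e ∉ M) (v : α) [Decidable (v ∈ e)] :
    {x ∈ insert e M | v ∈ x}.ncard = {x ∈ M | v ∈ x}.ncard + if v ∈ e then 1 else 0 := by
  split_ifs with hv
  · rw [← Set.ncard_insert_of_notMem (a := e) fun h => he h.1]
    congr 1
    grind
  · congr 1
    grind

theorem ncard_incident_exchange (he : e ∈ M) (hf : f ∉ M) (v : α) [Decidable (v ∈ e)]
    [Decidable (v ∈ f)] :
    {x ∈ insert f (M \ {e}) | v ∈ x}.ncard + (if v ∈ e then 1 else 0) =
      {x ∈ M | v ∈ x}.ncard + if v ∈ f then 1 else 0 := by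
  have hremove := ncard_incident_insert (M := M \ {e}) (e := e) (by simp) v
  rw [Set.insert_sdiff_singleton, Set.insert_eq_of_mem he] at hremove
  rw [ncard_incident_insert (fun h => hf h.1), hremove]
  omega

end Incidence

section Bipartite

variable {α : Type} {G : SimpleGraph α} {A B : Set α} {u v : α}

theorem Bipartition.mem_right_iff (hG : Bipartition G A B) : v ∈ B ↔ v ∉ A := by
  refine ⟨fun hB hA => Set.disjoint_left.mp hG.disjoint hA hB, fun hA => ?_⟩
  exact (hG.cover ▸ Set.mem_univ v : v ∈ A ∪ B).resolve_left hA

theorem Bipartition.mem_iff_notMem (hG : Bipartition G A B) (h : G.Adj u v) :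
    u ∈ A ↔ v ∉ A := by
  have := hG.between h
  rw [hG.mem_right_iff, hG.mem_right_iff] at this
  tauto

theorem Bipartition.exists_eq_mk (hG : Bipartition G A B) {e : Sym2 α} (he : e ∈ G.edgeSet) :
    ∃ a ∈ A, ∃ w ∈ B, e = s(a, w) := by
  induction e with
  | h x y =>
    rcases hG.between he with ⟨hx, hy⟩ | ⟨hx, hy⟩
    exacts [⟨x, hx, y, hy, rfl⟩, ⟨y, hy, x, hx, Sym2.eq_swap⟩]

end Bipartite

section Augmentation

variable {α : Type} [Finite α] {G : SimpleGraph α} {b : α → ℕ} {M : Set (Sym2 α)} {a a' w : α}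

theorem IsBMatching.insert_edge (hM : IsBMatching G b M) (ha : IsLoose b M a) (hw : IsLoose b M w)
    (hadj : G.Adj a w) (hnot : s(a, w) ∉ M) : IsBMatching G b (insert s(a, w) M) := by
  classical
  refine ⟨Set.insert_subset hadj hM.1, fun v => ?_⟩
  rw [ncard_incident_insert hnot]
  split_ifs with hv
  · rcases Sym2.mem_iff.mp hv with rfl | rfl
    exacts [ha, hw]
  · exact hM.2 v

theorem IsMaxBMatching.isTight_of_isLoose (hM : IsMaxBMatching G b M) (ha : IsLoose b M a)
    (hadj : G.Adj a w) (hnot : s(a, w) ∉ M) : IsTight b M w := by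
  refine eq_of_le_of_not_lt (hM.1.2 w) fun hw => ?_
  have hcard := hM.2 _ (hM.1.insert_edge ha hw hadj hnot)
  rw [Set.ncard_insert_of_notMem hnot] at hcard
  omega

theorem IsMaxBMatching.exchange (hM : IsMaxBMatching G b M) (ha : IsLoose b M a)
    (hadj : G.Adj a w) (hnot : s(a, w) ∉ M) (hmem : s(a', w) ∈ M) :
    IsMaxBMatching G b (insert s(a, w) (M \ {s(a', w)})) := by
  classical
  refine ⟨⟨Set.insert_subset hadj (Set.sdiff_subset.trans hM.1.1), fun v => ?_⟩, fun N hN => ?_⟩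
  · have hdeg := ncard_incident_exchange hmem hnot v
    have hv := hM.1.2 v
    by_cases hva : v = a
    · subst hva
      have : {e ∈ M | v ∈ e}.ncard < b v := ha
      grind
    · grind
  · rw [Set.ncard_exchange hnot hmem]
    exact hM.2 N hN

theorem IsBMatching.isLoose_exchange (hM : IsBMatching G b M) (hnot : s(a, w) ∉ M)
    (hmem : s(a', w) ∈ M) : IsLoose b (insert s(a, w) (M \ {s(a', w)})) a' := by
  classical
  have hdeg := ncard_incident_exchange hmem hnot a'
  have ha' : a' ∉ s(a, w) := by
    have := G.ne_of_adj (hM.1 hmem)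
    rw [Sym2.mem_iff]
    rintro (rfl | rfl) <;> contradiction
  have hle := hM.2 a'
  rw [if_pos (Sym2.mem_mk_left a' w), if_neg ha'] at hdeg
  unfold IsLoose
  omega

theorem IsMaxBMatching.exists_mem_of_isLoose (hM : IsMaxBMatching G b M) (ha : IsLoose b M a)
    (hadj : G.Adj a w) (hw : 0 < b w) : ∃ N, IsMaxBMatching G b N ∧ s(a, w) ∈ N := by
  by_cases hmem : s(a, w) ∈ M
  · exact ⟨M, hM, hmem⟩
  have htight : {e ∈ M | w ∈ e}.ncard = b w := hM.isTight_of_isLoose ha hadj hmem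
  obtain ⟨e, he, hwe⟩ := (Set.ncard_pos).mp (htight ▸ hw)
  obtain ⟨a', rfl⟩ := Sym2.mem_iff_exists.mp hwe
  rw [Sym2.eq_swap] at he
  exact ⟨_, hM.exchange ha hadj hmem he, Set.mem_insert _ _⟩

end Augmentation

section Slackness

variable {α : Type} {G : SimpleGraph α} {b : α → ℕ} {M : Set (Sym2 α)} {Z : Set α}

open Classical in
theorem sum_incident_add_edgesIn (Z : Finset α) {e : Sym2 α} (he : e ∈ G.edgeSet) :
    (∑ v ∈ Z, if v ∈ e then 1 else 0) + (if e ∈ edgesIn G Zᶜ then 1 else 0) =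
      1 + if e ∈ edgesIn G Z then 1 else 0 := by
  induction e with
  | h x y =>
    have hxy : x ≠ y := G.ne_of_adj he
    have hsplit (v : α) : (if v ∈ s(x, y) then 1 else 0) =
        (if v = x then 1 else 0) + if v = y then 1 else 0 := by
      grind
    simp only [hsplit, Finset.sum_add_distrib, Finset.sum_ite_eq']
    simp only [edgesIn, Set.mem_ofPred_eq, he, true_and, Sym2.mem_iff, forall_eq_or_imp,
      forall_eq, Set.mem_compl_iff, Finset.mem_coe]
    grind

variable [Finite α]

open Classical in
theorem bSum_incident_add_ncard (hM : M ⊆ G.edgeSet) (Z : Set α) :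
    bSum (fun v => {e ∈ M | v ∈ e}.ncard) Zᶜ + (M ∩ edgesIn G Z).ncard =
      M.ncard + (M ∩ edgesIn G Zᶜ).ncard := by
  have := Fintype.ofFinite α
  have hcount (p : Sym2 α → Prop) [DecidablePred p] :
      {e ∈ M | p e}.ncard = ∑ e ∈ M.toFinset, if p e then 1 else 0 := by
    rw [← Finset.card_filter, ← Set.ncard_coe_finset]
    congr 1
    ext e
    simp
  have hinter (X : Set α) : (M ∩ edgesIn G X).ncard =
      ∑ e ∈ M.toFinset, if e ∈ edgesIn G X then 1 else 0 := hcount (· ∈ edgesIn G X)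
  rw [bSum, finsum_mem_eq_toFinset_sum, hinter, hinter, Set.ncard_eq_toFinset_card' M,
    Finset.card_eq_sum_ones]
  simp only [hcount]
  rw [Finset.sum_comm, ← Finset.sum_add_distrib, ← Finset.sum_add_distrib]
  refine Finset.sum_congr rfl fun e he => ?_
  have hedge := sum_incident_add_edgesIn Zᶜ.toFinset (hM (Set.mem_toFinset.mp he))
  rwa [Set.coe_toFinset, compl_compl] at hedge

/-- Complementary slackness between an edge set `M` and a vertex set `Z`, for the bound
`|M| ≤ b(Zᶜ) + |E[Z]|` satisfied by every `b`-matching. -/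
def ComplementarySlack (G : SimpleGraph α) (b : α → ℕ) (Z : Set α) (M : Set (Sym2 α)) : Prop :=
  (∀ v ∉ Z, IsTight b M v) ∧ edgesIn G Z ⊆ M ∧ Disjoint M (edgesIn G Zᶜ)

theorem IsBMatching.ncard_eq_iff_complementarySlack (hM : IsBMatching G b M) :
    bSum b Zᶜ + (edgesIn G Z).ncard = M.ncard ↔ ComplementarySlack G b Z M := by
  have := Fintype.ofFinite α
  classical
  have hcount := bSum_incident_add_ncard hM.1 Z
  simp only [bSum, finsum_mem_eq_toFinset_sum] at hcount ⊢
  have hdeg : ∀ v ∈ Zᶜ.toFinset, {e ∈ M | v ∈ e}.ncard ≤ b v := fun v _ => hM.2 v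
  constructor
  · intro heq
    have hsum := Finset.sum_le_sum hdeg
    have hinner := Set.ncard_le_ncard (Set.inter_subset_right : M ∩ edgesIn G Z ⊆ _)
    refine ⟨fun v hv => ?_, ?_, ?_⟩
    · exact (Finset.sum_eq_sum_iff_of_le hdeg).mp (by omega) v (by simpa using hv)
    · rw [← Set.eq_of_subset_of_ncard_le Set.inter_subset_right
        (show (edgesIn G Z).ncard ≤ (M ∩ edgesIn G Z).ncard by omega)]
      exact Set.inter_subset_left
    · rw [Set.disjoint_iff_inter_eq_empty, ← Set.ncard_eq_zero]
      omega
  · rintro ⟨htight, hinner, houter⟩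
    rw [Set.inter_eq_right.mpr hinner, houter.inter_eq, Set.ncard_empty] at hcount
    rw [← add_zero M.ncard, ← hcount, Nat.add_right_cancel_iff]
    exact Finset.sum_congr rfl fun v hv => (htight v (by simpa using hv)).symm

theorem IsMaxBMatching.isVerifying_iff (hM : IsMaxBMatching G b M) :
    IsVerifying G b Z ↔ ComplementarySlack G b Z M := by
  rw [← hM.1.ncard_eq_iff_complementarySlack]
  refine ⟨fun ⟨N, hN, heq⟩ => ?_, fun heq => ⟨M, hM, heq⟩⟩
  rw [heq]
  exact le_antisymm (hM.2 _ hN.1) (hN.2 _ hM.1)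

theorem IsVerifying.mem_of_mem_Dset {v : α} (hZ : IsVerifying G b Z) (hv : v ∈ Dset G b) :
    v ∈ Z := by
  obtain ⟨M, hM, hloose⟩ := hv
  by_contra hvZ
  exact hloose.ne ((hM.isVerifying_iff.mp hZ).1 v hvZ)

end Slackness

section FlexibleEdges

variable {α : Type} {G : SimpleGraph α} {b : α → ℕ} {A B Z : Set α} {u v : α}

theorem flexGraph_le (G : SimpleGraph α) (b : α → ℕ) : flexGraph G b ≤ G := by
  rintro u v ⟨⟨M, hM, hmem⟩, -⟩
  exact hM.1.1 hmem

variable [Finite α]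

theorem pos_of_flexGraph_adj (h : (flexGraph G b).Adj u v) : 0 < b u := by
  obtain ⟨⟨M, hM, hmem⟩, -⟩ := h
  have hne : {e ∈ M | u ∈ e}.Nonempty := ⟨_, hmem, Sym2.mem_mk_left u v⟩
  exact ((Set.ncard_pos).mpr hne).trans_le (hM.1.2 u)

theorem IsVerifying.mem_iff_notMem_of_flexGraph_adj (hZ : IsVerifying G b Z)
    (h : (flexGraph G b).Adj u v) : u ∈ Z ↔ v ∉ Z := by
  have hadj := flexGraph_le G b h
  obtain ⟨⟨M, hM, hmem⟩, N, hN, hnot⟩ := h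
  have hnotOuter := (hM.isVerifying_iff.mp hZ).2.2.notMem_of_mem_left hmem
  have hnotInner := fun hin => hnot ((hN.isVerifying_iff.mp hZ).2.1 hin)
  simp only [edgesIn, Set.mem_ofPred_eq, SimpleGraph.mem_edgeSet, hadj, true_and, Sym2.mem_iff,
    forall_eq_or_imp, forall_eq, Set.mem_compl_iff] at hnotInner hnotOuter
  tauto

theorem IsVerifying.mem_iff_mem_of_reachable (hZ : IsVerifying G b Z) (hG : Bipartition G A B)
    (h : (flexGraph G b).Reachable u v) : (u ∈ Z ↔ u ∈ A) ↔ (v ∈ Z ↔ v ∈ A) := by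
  rw [SimpleGraph.reachable_iff_reflTransGen] at h
  induction h with
  | refl => rfl
  | tail _ hstep ih =>
    rw [ih, hZ.mem_iff_notMem_of_flexGraph_adj hstep, hG.mem_iff_notMem (flexGraph_le G b hstep),
      not_iff_not]

variable {c : FlexComp G b}

theorem LooseHooked.mem_verifying_iff (hc : LooseHooked G b A c) (hG : Bipartition G A B)
    (hZ : IsVerifying G b Z) (hv : v ∈ c.supp) : v ∈ Z ↔ v ∈ A := by
  obtain ⟨d, ⟨hdc, hdA⟩, hdD⟩ := hc
  exact (hZ.mem_iff_mem_of_reachable hG (c.reachable_of_mem_supp hdc hv)).mp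
    (iff_of_true (hZ.mem_of_mem_Dset hdD) hdA)

theorem LooseHooked.pos_of_notMem (hc : LooseHooked G b A c) (hv : v ∈ c.supp) (hvA : v ∉ A) :
    0 < b v := by
  obtain ⟨d, ⟨hdc, hdA⟩, -⟩ := hc
  obtain ⟨p⟩ := c.reachable_of_mem_supp hv hdc
  exact pos_of_flexGraph_adj
    (p.adj_snd (SimpleGraph.Walk.not_nil_of_ne (ne_of_mem_of_not_mem hdA hvA).symm))

end FlexibleEdges

section Exchanges

variable {α : Type} {G : SimpleGraph α} {A B : Set α} {b : α → ℕ} {M N : Set (Sym2 α)}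
  {a u v w : α}

/-- A pivot of `M`: a vertex joined by an edge outside `M` to an `M`-loose vertex of `A`. -/
def IsPivot (G : SimpleGraph α) (b : α → ℕ) (A : Set α) (M : Set (Sym2 α)) (w : α) : Prop :=
  ∃ a ∈ A, IsLoose b M a ∧ G.Adj a w ∧ s(a, w) ∉ M

/-- `IsExchange G b A M M'`: the edge set `M'` arises from `M` by replacing an edge `s(a', w)` by
an edge `s(a, w)` outside `M`, where `a` is an `M`-loose vertex of `A`. These are the elementary
steps of the alternating paths that start at loose vertices of `A`. -/
inductive IsExchange (G : SimpleGraph α) (b : α → ℕ) (A : Set α) (M : Set (Sym2 α)) :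
    Set (Sym2 α) → Prop
  | intro {a a' w : α} (ha : a ∈ A) (hloose : IsLoose b M a) (hadj : G.Adj a w)
      (hnot : s(a, w) ∉ M) (hmem : s(a', w) ∈ M) :
      IsExchange G b A M (insert s(a, w) (M \ {s(a', w)}))

/-- The edge sets obtained from `M` by any number of exchanges. -/
def exchangeClass (G : SimpleGraph α) (b : α → ℕ) (A : Set α) (M : Set (Sym2 α)) :
    Set (Set (Sym2 α)) :=
  {N | Relation.ReflTransGen (IsExchange G b A) M N}

/-- The vertices of `A` that are loose in some member of the exchange class of `M`. -/
def exchangeLoose (G : SimpleGraph α) (b : α → ℕ) (A : Set α) (M : Set (Sym2 α)) : Set α :=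
  {a ∈ A | ∃ N ∈ exchangeClass G b A M, IsLoose b N a}

/-- The pivots of the members of the exchange class of `M`. -/
def exchangePivots (G : SimpleGraph α) (b : α → ℕ) (A : Set α) (M : Set (Sym2 α)) : Set α :=
  {w | ∃ N ∈ exchangeClass G b A M, IsPivot G b A N w}

theorem self_mem_exchangeClass : M ∈ exchangeClass G b A M := .refl

variable [Finite α]

theorem IsMaxBMatching.exists_notMem_of_isPivot (hM : IsMaxBMatching G b M)
    (hw : IsPivot G b A M w) (u : α) : ∃ N, IsMaxBMatching G b N ∧ s(u, w) ∉ N := by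
  obtain ⟨a, -, hloose, hadj, hnot⟩ := hw
  by_cases hmem : s(u, w) ∈ M
  · refine ⟨_, hM.exchange hloose hadj hnot hmem, ?_⟩
    rintro (heq | ⟨-, hne⟩)
    exacts [hnot (heq ▸ hmem), hne rfl]
  · exact ⟨M, hM, hmem⟩

theorem IsMaxBMatching.of_mem_exchangeClass (hM : IsMaxBMatching G b M)
    (hN : N ∈ exchangeClass G b A M) : IsMaxBMatching G b N := by
  induction hN with
  | refl => exact hM
  | tail _ hstep ih =>
    obtain ⟨-, hloose, hadj, hnot, hmem⟩ := hstep
    exact ih.exchange hloose hadj hnot hmem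

theorem ncard_incident_eq_of_mem_exchangeClass (hG : Bipartition G A B)
    (hM : IsMaxBMatching G b M) (hN : N ∈ exchangeClass G b A M) (hv : v ∉ A) :
    {e ∈ N | v ∈ e}.ncard = {e ∈ M | v ∈ e}.ncard := by
  classical
  induction hN with
  | refl => rfl
  | tail hL hstep ih =>
    obtain @⟨a, a', w, ha, hloose, hadj, hnot, hmem⟩ := hstep
    have ha' : a' ∈ A := (hG.mem_iff_notMem ((hM.of_mem_exchangeClass hL).1.1 hmem)).mpr
      ((hG.mem_iff_notMem hadj).mp ha)
    have hiff : v ∈ s(a', w) ↔ v ∈ s(a, w) := by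
      rw [Sym2.mem_iff, Sym2.mem_iff, or_iff_right (ne_of_mem_of_not_mem ha' hv).symm,
        or_iff_right (ne_of_mem_of_not_mem ha hv).symm]
    have hdeg := ncard_incident_exchange hmem hnot v
    simp only [hiff, Nat.add_right_cancel_iff] at hdeg
    exact hdeg.trans ih

theorem mem_iff_mem_of_mem_exchangeClass (hG : Bipartition G A B) (hM : IsMaxBMatching G b M)
    (hN : N ∈ exchangeClass G b A M) (hu : u ∈ A)
    (huw : u ∉ exchangeLoose G b A M ∨ w ∉ exchangePivots G b A M) :
    s(u, w) ∈ N ↔ s(u, w) ∈ M := by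
  induction hN with
  | refl => rfl
  | @tail L N hL hstep ih =>
    have hN : N ∈ exchangeClass G b A M := hL.tail hstep
    obtain @⟨a, a', x, ha, hloose, hadj, hnot, hmem⟩ := hstep
    have hxA : x ∉ A := (hG.mem_iff_notMem hadj).mp ha
    have hx : x ∈ exchangePivots G b A M := ⟨L, hL, a, ha, hloose, hadj, hnot⟩
    have haT : a ∈ exchangeLoose G b A M := ⟨ha, L, hL, hloose⟩
    have ha'T (h : a' ∈ A) : a' ∈ exchangeLoose G b A M :=
      ⟨h, _, hN, (hM.of_mem_exchangeClass hL).1.isLoose_exchange hnot hmem⟩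
    have hne_added : s(u, w) ≠ s(a, x) := by
      grind [Sym2.eq_iff]
    have hne_removed : s(u, w) ≠ s(a', x) := by
      grind [Sym2.eq_iff]
    rw [← ih, Set.mem_insert_iff, or_iff_right hne_added, Set.mem_sdiff, Set.mem_singleton_iff,
      and_iff_left hne_removed]

theorem isTight_of_mem_exchangePivots (hG : Bipartition G A B) (hM : IsMaxBMatching G b M)
    (hw : w ∈ exchangePivots G b A M) : IsTight b M w := by
  obtain ⟨N, hN, a, ha, hloose, hadj, hnot⟩ := hw
  have hwA : w ∉ A := (hG.mem_iff_notMem hadj).mp ha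
  rw [IsTight, ← ncard_incident_eq_of_mem_exchangeClass hG hM hN hwA]
  exact (hM.of_mem_exchangeClass hN).isTight_of_isLoose hloose hadj hnot

theorem mem_of_mem_exchangeLoose_of_notMem_exchangePivots (hG : Bipartition G A B)
    (hM : IsMaxBMatching G b M) (ha : a ∈ exchangeLoose G b A M)
    (hw : w ∉ exchangePivots G b A M) (hadj : G.Adj a w) : s(a, w) ∈ M := by
  obtain ⟨haA, N, hN, hloose⟩ := ha
  rw [← mem_iff_mem_of_mem_exchangeClass hG hM hN haA (.inr hw)]
  by_contra hnot
  exact hw ⟨N, hN, a, haA, hloose, hadj, hnot⟩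

theorem mem_exchangeLoose_of_mem_exchangePivots (hG : Bipartition G A B)
    (hM : IsMaxBMatching G b M) (hu : u ∈ A) (hw : w ∈ exchangePivots G b A M)
    (hmem : s(u, w) ∈ M) : u ∈ exchangeLoose G b A M := by
  by_contra huT
  obtain ⟨N, hN, a, ha, hloose, hadj, hnot⟩ := hw
  rw [← mem_iff_mem_of_mem_exchangeClass hG hM hN hu (.inl huT)] at hmem
  exact huT ⟨hu, _, hN.tail ⟨ha, hloose, hadj, hnot, hmem⟩,
    (hM.of_mem_exchangeClass hN).1.isLoose_exchange hnot hmem⟩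

theorem isVerifying_exchangeLoose_union (hG : Bipartition G A B) (hM : IsMaxBMatching G b M) :
    IsVerifying G b (exchangeLoose G b A M ∪ (B \ exchangePivots G b A M)) := by
  set Z := exchangeLoose G b A M ∪ (B \ exchangePivots G b A M) with hZ
  have hZA {a : α} (ha : a ∈ A) : a ∈ Z ↔ a ∈ exchangeLoose G b A M := by
    simp [hZ, hG.mem_right_iff, ha]
  have hZB {w : α} (hw : w ∈ B) : w ∈ Z ↔ w ∉ exchangePivots G b A M := by
    simp [hZ, exchangeLoose, hw, hG.mem_right_iff.mp hw]
  refine hM.isVerifying_iff.mpr ⟨fun v hv => ?_, ?_, ?_⟩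
  · by_cases hvA : v ∈ A
    · rw [hZA hvA] at hv
      exact eq_of_le_of_not_lt (hM.1.2 v) fun hloose => hv ⟨hvA, M, self_mem_exchangeClass, hloose⟩
    · rw [hZB (hG.mem_right_iff.mpr hvA), not_not] at hv
      exact isTight_of_mem_exchangePivots hG hM hv
  · rintro e ⟨he, hinZ⟩
    obtain ⟨a, ha, w, hw, rfl⟩ := hG.exists_eq_mk he
    exact mem_of_mem_exchangeLoose_of_notMem_exchangePivots hG hM
      ((hZA ha).mp (hinZ a (Sym2.mem_mk_left a w))) ((hZB hw).mp (hinZ w (Sym2.mem_mk_right a w)))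
      he
  · refine Set.disjoint_left.mpr fun e heM ⟨he, hinZ⟩ => ?_
    obtain ⟨a, ha, w, hw, rfl⟩ := hG.exists_eq_mk he
    have hwS := not_not.mp (mt (hZB hw).mpr (hinZ w (Sym2.mem_mk_right a w)))
    exact hinZ a (Sym2.mem_mk_left a w)
      ((hZA ha).mpr (mem_exchangeLoose_of_mem_exchangePivots hG hM ha hwS heM))

end Exchanges

section HookedComponents

variable {α : Type} [Finite α] {G : SimpleGraph α} {A B : Set α} {b : α → ℕ}
  {c c₁ c₂ : FlexComp G b} {u v : α}

theorem LooseHooked.mem_Dset (hc : LooseHooked G b A c) (hG : Bipartition G A B)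
    (hu : u ∈ c.supp) (huA : u ∈ A) : u ∈ Dset G b := by
  have ⟨_, _, M, hM, _⟩ := hc
  rcases (hc.mem_verifying_iff hG (isVerifying_exchangeLoose_union hG hM) hu).mpr huA with
    ⟨-, N, hN, hloose⟩ | ⟨huB, -⟩
  · exact ⟨N, hM.of_mem_exchangeClass hN, hloose⟩
  · exact (hG.mem_right_iff.mp huB huA).elim

theorem LooseHooked.exists_isPivot (hc : LooseHooked G b A c) (hG : Bipartition G A B)
    (hv : v ∈ c.supp) (hvA : v ∉ A) : ∃ M, IsMaxBMatching G b M ∧ IsPivot G b A M v := by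
  have ⟨_, _, M, hM, _⟩ := hc
  have hvZ := mt (hc.mem_verifying_iff hG (isVerifying_exchangeLoose_union hG hM) hv).mp hvA
  have hvS : v ∈ exchangePivots G b A M :=
    by_contra fun hvS => hvZ (.inr ⟨hG.mem_right_iff.mpr hvA, hvS⟩)
  obtain ⟨N, hN, hpivot⟩ := hvS
  exact ⟨N, hM.of_mem_exchangeClass hN, hpivot⟩

theorem LooseHooked.flexGraph_adj (h₁ : LooseHooked G b A c₁) (h₂ : LooseHooked G b A c₂)
    (hG : Bipartition G A B) (hu : u ∈ c₁.supp) (huA : u ∈ A) (hv : v ∈ c₂.supp)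
    (hadj : G.Adj u v) : (flexGraph G b).Adj u v := by
  have hvA : v ∉ A := (hG.mem_iff_notMem hadj).mp huA
  obtain ⟨M, hM, hloose⟩ := h₁.mem_Dset hG hu huA
  obtain ⟨N, hN, hpivot⟩ := h₂.exists_isPivot hG hv hvA
  exact ⟨hM.exists_mem_of_isLoose hloose hadj (h₂.pos_of_notMem hv hvA),
    hN.exists_notMem_of_isPivot hpivot u⟩

end HookedComponents

/-- Two distinct `b`-loose flexible components both hooked up by `A` are joined by no edge
of `G`. -/
theorem stmt_9 (G : SimpleGraph V) (A B : Set V) (hG : Bipartition G A B) (b : V → ℕ)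
    (c₁ c₂ : FlexComp G b) (h₁ : LooseHooked G b A c₁) (h₂ : LooseHooked G b A c₂)
    (hne : c₁ ≠ c₂) :
    ∀ u ∈ c₁.supp, ∀ v ∈ c₂.supp, ¬ G.Adj u v := by
  intro u hu v hv hadj
  have hflex : (flexGraph G b).Adj u v := by
    by_cases huA : u ∈ A
    · exact h₁.flexGraph_adj h₂ hG hu huA hv hadj
    · have hvA : v ∈ A := (hG.mem_iff_notMem hadj.symm).mpr huA
      exact (h₂.flexGraph_adj h₁ hG hv hvA hu hadj.symm).symm
  exact hne (SimpleGraph.ConnectedComponent.eq_of_common_vertex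
    (c₁.mem_supp_of_adj_mem_supp hu hflex) hv)
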